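/- arXiv:2007.10894 — 4 statements merged into one kernel-verified Lean document; each statement's English description precedes it below -/
import Mathlib

section
/- Let V be a real inner product space and let x₀, x₁ ∈ V be orthonormal vectors. For φ ∈ ℝ set ψ_φ := cos φ · x₀ + sin φ · x₁. Fix θ ∈ ℝ, let O(v) := v − 2⟪x₁, v⟫ x₁ (the oracle reflection flipping the x₁-component) and R(v) := 2⟪ψ_θ, v⟫ ψ_θ − v (the reflection about ψ_θ), and let G := R ∘ O. Then for every natural number j, G^j ψ_θ = cos((2j+1)θ) · x₀ + sin((2j+1)θ) · x₁. -/
open Real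
open scoped RealInnerProductSpace

theorem grover_rotation {V : Type*} [NormedAddCommGroup V] [InnerProductSpace ℝ V]
    (x₀ x₁ : V) (h₀ : ‖x₀‖ = 1) (h₁ : ‖x₁‖ = 1) (horth : ⟪x₀, x₁⟫ = 0)
    (θ : ℝ) (ψ : ℝ → V)
    (hψ : ∀ φ : ℝ, ψ φ = Real.cos φ • x₀ + Real.sin φ • x₁)
    (O R G : V → V)
    (hO : ∀ v, O v = v - (2 * ⟪x₁, v⟫) • x₁)
    (hR : ∀ v, R v = (2 * ⟪ψ θ, v⟫) • ψ θ - v)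
    (hG : G = R ∘ O) (j : ℕ) :
    G^[j] (ψ θ) =
      Real.cos ((2 * j + 1) * θ) • x₀ + Real.sin ((2 * j + 1) * θ) • x₁ := by
  have h10 : ⟪x₁, x₀⟫ = 0 := by rw [real_inner_comm]; exact horth
  have h00 : ⟪x₀, x₀⟫ = 1 := by rw [real_inner_self_eq_norm_sq, h₀]; norm_num
  have h11 : ⟪x₁, x₁⟫ = 1 := by rw [real_inner_self_eq_norm_sq, h₁]; norm_num
  have hOψ : ∀ φ, O (ψ φ) = Real.cos φ • x₀ + (-Real.sin φ) • x₁ := by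
    intro φ
    rw [hO, hψ, inner_add_right, inner_smul_right, inner_smul_right, h10, h11]
    module
  have hin : ∀ φ, ⟪ψ θ, Real.cos φ • x₀ + (-Real.sin φ) • x₁⟫ = Real.cos (θ + φ) := by
    intro φ
    rw [hψ, Real.cos_add]
    simp only [inner_add_left, inner_add_right, real_inner_smul_left, real_inner_smul_right,
      h00, h11, h10, horth]
    ring
  have hstep : ∀ φ, G (ψ φ) = ψ (2 * θ + φ) := by
    intro φ
    have hc : Real.cos (2 * θ + φ) = 2 * Real.cos (θ + φ) * Real.cos θ - Real.cos φ := by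
      rw [show 2 * θ + φ = (θ + φ) + θ by ring]
      have h : Real.cos φ = Real.cos ((θ + φ) - θ) := by congr 1; ring
      rw [h, Real.cos_sub, Real.cos_add (θ + φ) θ]; ring
    have hs : Real.sin (2 * θ + φ) = 2 * Real.cos (θ + φ) * Real.sin θ + Real.sin φ := by
      rw [show 2 * θ + φ = (θ + φ) + θ by ring]
      have h : Real.sin φ = Real.sin ((θ + φ) - θ) := by congr 1; ring
      rw [h, Real.sin_sub, Real.sin_add (θ + φ) θ]; ring
    rw [hG, Function.comp_apply, hOψ, hR, hin, hψ, hψ, hc, hs]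
    module
  rw [← hψ]
  induction j with
  | zero => simp
  | succ k ih =>
    rw [Function.iterate_succ_apply', ih, hstep]
    congr 1
    push_cast
    ring
end

section
/- Let n ≥ 1 be a natural number, let N = 2^n, and in the real Euclidean space ℝ^N let u be the uniform superposition vector with every coordinate equal to 1/√N. Fix a target index t and let e_t be the corresponding standard basis vector. Define the oracle O(v) := v − 2⟪e_t, v⟫ e_t, the diffusion R(v) := 2⟪u, v⟫ u − v, and the Grover iterate G := R ∘ O. Then for every natural number j, ⟪e_t, G^j u⟫ = sin((2j+1)·θ), where θ = arcsin(√(1/2^n)). -/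
open Real
open scoped RealInnerProductSpace

theorem uniform_amplification (n : ℕ) (hn : 1 ≤ n) (t : Fin (2 ^ n))
    (u : EuclideanSpace ℝ (Fin (2 ^ n)))
    (hu : ∀ i, u i = 1 / Real.sqrt (2 ^ n))
    (O R G : EuclideanSpace ℝ (Fin (2 ^ n)) → EuclideanSpace ℝ (Fin (2 ^ n)))
    (hO : ∀ v, O v = v - (2 * ⟪EuclideanSpace.single t (1 : ℝ), v⟫) •
      EuclideanSpace.single t (1 : ℝ))
    (hR : ∀ v, R v = (2 * ⟪u, v⟫) • u - v)
    (hG : G = R ∘ O) (j : ℕ) :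
    ⟪EuclideanSpace.single t (1 : ℝ), G^[j] u⟫ =
      Real.sin ((2 * j + 1) * Real.arcsin (Real.sqrt (1 / 2 ^ n))) := by
  set θ := Real.arcsin (Real.sqrt (1 / 2 ^ n)) with hθ
  set e : EuclideanSpace ℝ (Fin (2 ^ n)) := EuclideanSpace.single t (1 : ℝ) with he
  have hpos : (0 : ℝ) < 2 ^ n := by positivity
  have hsin : Real.sin θ = 1 / Real.sqrt (2 ^ n) := by
    have h1 : Real.sqrt (1 / 2 ^ n) ≤ 1 := by
      rw [Real.sqrt_le_iff, one_pow, div_le_one hpos]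
      exact ⟨zero_le_one, one_le_pow₀ (by norm_num)⟩
    rw [hθ, Real.sin_arcsin (by linarith [Real.sqrt_nonneg (1 / 2 ^ n)]) h1,
      Real.sqrt_div zero_le_one, Real.sqrt_one]
  have heu : ⟪e, u⟫ = Real.sin θ := by
    rw [hsin, ← hu t, he, EuclideanSpace.inner_single_left]
    simp
  have hue : ⟪u, e⟫ = Real.sin θ := by rw [real_inner_comm, heu]
  have hee : ⟪e, e⟫ = 1 := by
    rw [he, EuclideanSpace.inner_single_left]
    simp
  have huu : ⟪u, u⟫ = 1 := by
    rw [PiLp.inner_apply]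
    have : ∀ i, ⟪u i, u i⟫ = 1 / (2 : ℝ) ^ n := by
      intro i
      rw [hu i, real_inner_self_eq_norm_sq, Real.norm_eq_abs, sq_abs, div_pow,
        Real.sq_sqrt hpos.le, one_pow]
    simp only [this, Finset.sum_const, Finset.card_univ, Fintype.card_fin, nsmul_eq_mul]
    push_cast
    field_simp
  suffices h : ⟪e, G^[j] u⟫ = Real.sin ((2 * j + 1) * θ) ∧
      ⟪u, G^[j] u⟫ = Real.cos ((2 * j) * θ) from h.1
  induction j with
  | zero => exact ⟨by simp [heu], by rw [Function.iterate_zero_apply, huu]; simp⟩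
  | succ k ih =>
    obtain ⟨ha, hb⟩ := ih
    rw [Function.iterate_succ_apply']
    generalize G^[k] u = v at ha hb
    have hGv : G v = (2 * (⟪u, v⟫ - 2 * ⟪e, v⟫ * Real.sin θ)) • u
        - (v - (2 * ⟪e, v⟫) • e) := by
      rw [hG, Function.comp_apply, hR, hO, inner_sub_right, inner_smul_right, hue]
    have hb' : ⟪u, v⟫ - 2 * ⟪e, v⟫ * Real.sin θ = Real.cos ((2 * k + 1) * θ + θ) := by
      rw [ha, hb, show (2 * (k : ℝ)) * θ = (2 * k + 1) * θ - θ by ring,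
        Real.cos_sub, Real.cos_add]
      ring
    rw [hGv, hb']
    simp only [inner_sub_right, inner_smul_right, heu, hue, hee, huu]
    push_cast
    constructor
    · rw [ha, show (2 * ((k : ℝ) + 1) + 1) * θ = ((2 * k + 1) * θ + θ) + θ by ring,
        show Real.sin ((2 * (k : ℝ) + 1) * θ) = Real.sin (((2 * k + 1) * θ + θ) - θ) by
          congr 1; ring]
      rw [Real.sin_sub, Real.sin_add (_ + _)]
      ring
    · rw [show (2 * ((k : ℝ) + 1)) * θ = (2 * k + 1) * θ + θ by ring]
      linarith
end

section
/- Let n be a natural number and k a natural number with 1 ≤ k ≤ n−1, and set ω_max := 2·arctan(√(k/(n−k))). Then a_{n,k}(ω_max) = √( k^k · (n−k)^{n−k} / n^n ), and for every ω ∈ [0, π], a_{n,k}(ω) ≤ a_{n,k}(ω_max); i.e., ω_max maximizes a_{n,k} on [0, π]. -/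
open Real

theorem key_amgm (k m : ℕ) (hk : 0 < k) (hm : 0 < m) (x y : ℝ) (hx : 0 ≤ x) (hy : 0 ≤ y)
    (h : x + y = 1) :
    x ^ k * y ^ m ≤ ((k : ℝ) ^ k * (m : ℝ) ^ m) / ((k + m : ℕ) : ℝ) ^ (k + m) := by
  have hk' : (0 : ℝ) < k := by exact_mod_cast hk
  have hm' : (0 : ℝ) < m := by exact_mod_cast hm
  push_cast
  set N : ℝ := (k : ℝ) + m with hN
  have hN0 : 0 < N := by positivity
  have h1 : x * N / k ≤ exp (x * N / k - 1) := by
    linarith [Real.add_one_le_exp (x * N / k - 1)]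
  have h2 : y * N / m ≤ exp (y * N / m - 1) := by
    linarith [Real.add_one_le_exp (y * N / m - 1)]
  have h3 : (x * N / k) ^ k * (y * N / m) ^ m ≤ 1 := by
    calc (x * N / k) ^ k * (y * N / m) ^ m
        ≤ exp (x * N / k - 1) ^ k * exp (y * N / m - 1) ^ m := by gcongr
      _ = exp (k * (x * N / k - 1) + m * (y * N / m - 1)) := by
        rw [Real.exp_add, Real.exp_nat_mul, Real.exp_nat_mul]
      _ = 1 := by
        rw [Real.exp_eq_one_iff]
        field_simp
        have : y = 1 - x := by linarith
        rw [this, hN]; ring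
  rw [le_div_iff₀ (by positivity)]
  have h4 : x ^ k * y ^ m * N ^ (k + m)
      = ((x * N / k) ^ k * (y * N / m) ^ m) * ((k : ℝ) ^ k * (m : ℝ) ^ m) := by
    rw [div_pow, div_pow, mul_pow, mul_pow, pow_add]
    field_simp
  rw [h4]
  exact mul_le_of_le_one_left (by positivity) h3

theorem omega_max_maximizes (n k : ℕ) (hk1 : 1 ≤ k) (hk2 : k ≤ n - 1)
    (ωmax : ℝ)
    (hωmax : ωmax = 2 * Real.arctan (Real.sqrt ((k : ℝ) / ((n - k : ℕ) : ℝ)))) :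
    Real.sin (ωmax / 2) ^ k * Real.cos (ωmax / 2) ^ (n - k) =
      Real.sqrt (((k : ℝ) ^ k * ((n - k : ℕ) : ℝ) ^ (n - k)) / (n : ℝ) ^ n) ∧
    ∀ ω ∈ Set.Icc (0 : ℝ) Real.pi,
      Real.sin (ω / 2) ^ k * Real.cos (ω / 2) ^ (n - k) ≤
        Real.sin (ωmax / 2) ^ k * Real.cos (ωmax / 2) ^ (n - k) := by
  obtain ⟨m, rfl⟩ : ∃ m, n = k + m := ⟨n - k, by omega⟩
  have hm : 0 < m := by omega
  rw [Nat.add_sub_cancel_left] at *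
  have hk' : (0 : ℝ) < k := by exact_mod_cast hk1
  have hm' : (0 : ℝ) < m := by exact_mod_cast hm
  have hw : ωmax / 2 = arctan (√((k : ℝ) / m)) := by rw [hωmax]; ring
  have hc0 : 0 < cos (ωmax / 2) := by rw [hw]; exact cos_arctan_pos _
  have hs0 : 0 < sin (ωmax / 2) := by rw [hw, sin_arctan_pos]; positivity
  have hc : cos (ωmax / 2) ^ 2 = m / ((k : ℝ) + m) := by
    rw [hw, cos_sq_arctan, Real.sq_sqrt (by positivity)]
    field_simp
    ring
  have hs : sin (ωmax / 2) ^ 2 = k / ((k : ℝ) + m) := by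
    rw [Real.sin_sq, hc]
    field_simp
    ring
  have e : Real.sin (ωmax / 2) ^ k * Real.cos (ωmax / 2) ^ m =
      √(((k : ℝ) ^ k * (m : ℝ) ^ m) / ((k + m : ℕ) : ℝ) ^ (k + m)) := by
    symm
    rw [Real.sqrt_eq_iff_mul_self_eq (by positivity) (by positivity)]
    symm
    calc _ = (sin (ωmax / 2) ^ 2) ^ k * (cos (ωmax / 2) ^ 2) ^ m := by ring
      _ = _ := by
        rw [hs, hc, div_pow, div_pow, pow_add]
        push_cast
        field_simp
  refine ⟨e, fun ω hω => ?_⟩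
  rw [e]
  apply Real.le_sqrt_of_sq_le
  calc _ = (sin (ω / 2) ^ 2) ^ k * (cos (ω / 2) ^ 2) ^ m := by ring
    _ ≤ _ := key_amgm k m hk1 hm _ _ (sq_nonneg _) (sq_nonneg _) (Real.sin_sq_add_cos_sq _)
end

section
/- Let n ≥ 1 and 0 ≤ k ≤ n be natural numbers. Define θ_max := arcsin(√( k^k · (n−k)^{n−k} / n^n )) (with the convention 0^0 = 1) and θ_uniform := arcsin(√(1/2^n)). Then θ_max ≥ θ_uniform, and consequently ⌈π/(4·θ_max) − 1/2⌉ ≤ ⌈π/(4·θ_uniform) − 1/2⌉; i.e., the ideal number of binomial Grover iterations for a Hamming-weight-k target is at most the number for the uniform version. -/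
open Real

lemma aux_pow_le (x : ℝ) (hx : 0 ≤ x) (k : ℕ) :
    x ^ k ≤ (k : ℝ) ^ k * Real.exp (x - k) := by
  rcases Nat.eq_zero_or_pos k with rfl | hk
  · simpa using hx
  · have hk' : (0 : ℝ) < k := by exact_mod_cast hk
    have h1 : x ≤ k * Real.exp (x / k - 1) := by
      have h := Real.add_one_le_exp (x / k - 1)
      have h2 : x / k ≤ Real.exp (x / k - 1) := by linarith
      rw [div_le_iff₀ hk'] at h2
      linarith
    calc x ^ k ≤ (k * Real.exp (x / k - 1)) ^ k := pow_le_pow_left₀ hx h1 k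
      _ = (k : ℝ) ^ k * Real.exp (x - k) := by
        rw [mul_pow, ← Real.exp_nat_mul]
        congr 2
        field_simp

theorem ideal_iterations_le_uniform (n k : ℕ) (hn : 1 ≤ n) (hk : k ≤ n)
    (θmax θuniform : ℝ)
    (hθmax : θmax = Real.arcsin
      (Real.sqrt (((k : ℝ) ^ k * ((n - k : ℕ) : ℝ) ^ (n - k)) / (n : ℝ) ^ n)))
    (hθuniform : θuniform = Real.arcsin (Real.sqrt (1 / 2 ^ n))) :
    θuniform ≤ θmax ∧
      ⌈Real.pi / (4 * θmax) - 1 / 2⌉ ≤ ⌈Real.pi / (4 * θuniform) - 1 / 2⌉ := by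
  have hn' : (0 : ℝ) < n := by exact_mod_cast hn
  have key : (1 : ℝ) / 2 ^ n ≤
      ((k : ℝ) ^ k * ((n - k : ℕ) : ℝ) ^ (n - k)) / (n : ℝ) ^ n := by
    obtain ⟨m, rfl⟩ := Nat.exists_eq_add_of_le hk
    rw [Nat.add_sub_cancel_left]
    set x : ℝ := ((k + m : ℕ) : ℝ) with hx
    have h1 := aux_pow_le (x / 2) (by positivity) k
    have h2 := aux_pow_le (x / 2) (by positivity) m
    have h3 : (x / 2) ^ (k + m) ≤ (k : ℝ) ^ k * (m : ℝ) ^ m := by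
      calc (x / 2) ^ (k + m) = (x / 2) ^ k * (x / 2) ^ m := pow_add _ _ _
        _ ≤ ((k : ℝ) ^ k * Real.exp (x / 2 - k)) * ((m : ℝ) ^ m * Real.exp (x / 2 - m)) :=
          mul_le_mul h1 h2 (by positivity) (by positivity)
        _ = (k : ℝ) ^ k * (m : ℝ) ^ m * Real.exp ((x / 2 - k) + (x / 2 - m)) := by
          rw [Real.exp_add]; ring
        _ = (k : ℝ) ^ k * (m : ℝ) ^ m := by
          have : (x / 2 - k) + (x / 2 - m) = 0 := by rw [hx]; push_cast; ring
          rw [this, Real.exp_zero, mul_one]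
    rw [le_div_iff₀ (by positivity)]
    rw [div_pow] at h3
    calc _ = x ^ (k + m) / 2 ^ (k + m) := by ring
      _ ≤ _ := h3
  have hle : θuniform ≤ θmax := by
    rw [hθmax, hθuniform]
    exact Real.monotone_arcsin (Real.sqrt_le_sqrt key)
  have hpos : 0 < θuniform := by
    rw [hθuniform, Real.arcsin_pos]
    positivity
  refine ⟨hle, Int.ceil_le_ceil ?_⟩
  have := Real.pi_pos
  gcongr
end
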